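/- For all n ≥ 3 and 0 ≤ k ≤ n−2, the polynomials P_n^{(k)}(x) satisfy the ballot-like recurrence P_n^{(k)}(x) = x^k · Σ_{i=max(k−1,0)}^{n−3} P_{n−1}^{(i)}(x). -/

import Mathlib

/-!
For a word `w`, compare the Dyck paths ending in `w` with those ending in `U D w`: inserting a peak
before `w` is a bijection from the former, in semilength `n`, to the latter, in semilength `n + 1`.
Everything after the insertion point is merely shifted, so the area grows by `2 h + 1`, where `h` is
the height at the insertion point, and the rank grows by `h`.

For `w = D^k U D` this height is `k`, and `U D w = U D^{k+1} U D`; hence `P_n^{(k)}` is `x^k` times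
the rank generating function of the Dyck paths of semilength `n - 1` ending in `D^k U D`. Such a
path has an up step before that suffix, and cutting it at the last one shows that it ends in
`U D^{i+1} U D` for exactly one `i`, where `i + 1 ≥ k`. The descent `D^{i+1}` starts at
height `i + 1`, so at least `i + 1` up steps precede it; the last peak adds one more, which gives
`i + 2 ≤ n - 1`.
-/

/-- A Dyck path is a list of steps in `{+1, -1}` whose partial sums (heights)
are all nonnegative and whose total sum is `0`. -/
def IsDyck (s : List ℤ) : Prop :=
  (∀ x ∈ s, x = 1 ∨ x = -1) ∧ (∀ i : ℕ, 0 ≤ (s.take i).sum) ∧ s.sum = 0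

/-- The area of a path: the sum of all heights `h_0, …, h_{length}`. -/
def area (s : List ℤ) : ℤ :=
  ∑ i ∈ Finset.range (s.length + 1), (s.take i).sum

/-- The length of the last descent, i.e. of the final maximal run of `-1` steps. -/
def lastDescentLen (s : List ℤ) : ℕ :=
  (s.reverse.takeWhile (fun x => x == (-1 : ℤ))).length

/-- The son of a path `s` at height `j`: insert a peak `+1, -1` immediately
after position `length - j`. -/
def son (s : List ℤ) (j : ℕ) : List ℤ :=
  s.take (s.length - j) ++ [1, -1] ++ s.drop (s.length - j)

/-- `endsUDkUD s k` says the final `k + 3` steps of `s` are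
`+1`, followed by `k + 1` copies of `-1`, followed by `+1, -1`
(i.e. `s` ends with `U D^{k+1} U D`). -/
def endsUDkUD (s : List ℤ) (k : ℕ) : Prop :=
  ∃ t : List ℤ, s = t ++ (1 :: (List.replicate (k + 1) (-1) ++ [1, -1]))

/-- The polynomial `P_n^{(k)}(x) = Σ_P x^{rank P}`, the sum being over all Dyck
paths `P` of semilength `n` ending with `U D^{k+1} U D`; the coefficient of
`x^i` is the number of such paths of rank `i`, i.e. of area `n + 2i`
(all ranks are at most `n(n-1)/2 ≤ n²`, so the range below is exhaustive). -/
noncomputable def Pnk (n k : ℕ) : Polynomial ℤ :=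
  ∑ i ∈ Finset.range (n * n + 1),
    Polynomial.C ((Nat.card {P : List ℤ // IsDyck P ∧ P.length = 2 * n ∧
      endsUDkUD P k ∧ area P = (n : ℤ) + 2 * i}) : ℤ) * Polynomial.X ^ i

/-- The rank `(area - n) / 2` of a path, where the semilength `n` is half the number of steps. For
Dyck paths both the division and `Int.toNat` are exact, see `IsDyck.area_eq`. -/
def rank (s : List ℤ) : ℕ :=
  ((area s - s.length / 2) / 2).toNat

/-- The word `D^k U D`. Prefixing it with a peak `U D` gives the ending `U D^{k+1} U D` of the paths
counted by `Pnk`. -/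
def descentPeak (k : ℕ) : List ℤ :=
  List.replicate k (-1) ++ [1, -1]

/-- The Dyck paths of semilength `n` whose last steps spell the word `w`. -/
def dyckPathsEndingIn (n : ℕ) (w : List ℤ) : Set (List ℤ) :=
  {P | IsDyck P ∧ P.length = 2 * n ∧ w <:+ P}

/-- The generating function by rank of a set of paths, meaningful when the set is finite. -/
noncomputable def rankGenFun (S : Set (List ℤ)) : Polynomial ℤ :=
  ∑ᶠ P ∈ S, Polynomial.X ^ rank P

/-! ### Lists -/

lemma finite_length_eq_of_forall_mem {α : Type*} {A : Set α} (hA : A.Finite) (n : ℕ) :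
    {l : List α | (∀ x ∈ l, x ∈ A) ∧ l.length = n}.Finite := by
  have := hA.to_subtype
  refine ((List.finite_length_eq A n).image (List.map Subtype.val)).subset ?_
  rintro l ⟨hl, hlen⟩
  lift l to List A using hl
  exact ⟨l, by simpa using hlen, rfl⟩

lemma exists_eq_append_cons_notMem {α : Type*} {a : α} {l : List α} (h : a ∈ l) :
    ∃ u v, l = u ++ a :: v ∧ a ∉ v := by
  obtain ⟨v, u, hl, hv⟩ := List.eq_append_cons_of_mem (List.mem_reverse.2 h)
  exact ⟨u.reverse, v.reverse, by simpa using congrArg List.reverse hl, by simpa using hv⟩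

lemma sum_emod_two {s : List ℤ} (hs : ∀ x ∈ s, x = 1 ∨ x = -1) :
    s.sum % 2 = (s.length : ℤ) % 2 := by
  induction s with
  | nil => rfl
  | cons x s ih =>
    rw [List.forall_mem_cons] at hs
    have := ih hs.2
    rw [List.sum_cons, List.length_cons]
    omega

lemma forall_sum_take_cons_nonneg_iff {M : Type*} [AddMonoid M] [LE M] (c x : M) (s : List M) :
    (∀ i, 0 ≤ c + ((x :: s).take i).sum) ↔ 0 ≤ c ∧ ∀ i, 0 ≤ c + x + (s.take i).sum := by
  rw [← Nat.and_forall_add_one]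
  simp [add_assoc]

lemma forall_sum_take_append_nonneg_iff {M : Type*} [AddMonoid M] [LE M] (s t : List M) :
    (∀ i, 0 ≤ ((s ++ t).take i).sum) ↔
      (∀ i, 0 ≤ (s.take i).sum) ∧ ∀ i, 0 ≤ s.sum + (t.take i).sum := by
  constructor
  · intro h
    refine ⟨fun i => ?_, fun i => ?_⟩
    · have := h (min i s.length)
      rwa [List.take_append_of_le_length (min_le_right _ _), ← List.take_eq_take_min] at this
    · simpa [List.take_length_add_append] using h (s.length + i)
  · rintro ⟨hs, ht⟩ i
    rcases le_total i s.length with hi | hi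
    · simpa [List.take_append_of_le_length hi] using hs i
    · obtain ⟨j, rfl⟩ := Nat.exists_eq_add_of_le hi
      simpa [List.take_length_add_append] using ht j

/-! ### Area and rank -/

lemma area_cons (x : ℤ) (s : List ℤ) : area (x :: s) = (s.length + 1) * x + area s := by
  unfold area
  rw [List.length_cons, Finset.sum_range_succ']
  simp [Finset.sum_add_distrib]

lemma area_append (s t : List ℤ) : area (s ++ t) = area s + t.length * s.sum + area t := by
  induction s with
  | nil => simp [area]
  | cons x s ih =>
    simp only [List.cons_append, area_cons, ih, List.length_append, List.sum_cons]
    push_cast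
    ring

lemma sum_range_succ_mod_two (n : ℕ) : ∑ i ∈ Finset.range (n + 1), i % 2 = (n + 1) / 2 := by
  induction n with
  | zero => rfl
  | succ n ih =>
    rw [Finset.sum_range_succ, ih]
    omega

/-- The height after `i` steps has the parity of `i`. -/
lemma area_eq_add_two_mul_sum {s : List ℤ} (hs : ∀ x ∈ s, x = 1 ∨ x = -1) :
    area s = ((s.length + 1) / 2 : ℕ) +
      2 * ∑ i ∈ Finset.range (s.length + 1), (s.take i).sum / 2 := by
  have height_eq : ∀ i ∈ Finset.range (s.length + 1),
      (s.take i).sum = (i % 2 : ℕ) + 2 * ((s.take i).sum / 2) := by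
    intro i hi
    have parity := sum_emod_two (s := s.take i) fun x hx => hs x (List.mem_of_mem_take hx)
    rw [List.length_take_of_le (Finset.mem_range_succ_iff.1 hi)] at parity
    omega
  rw [area, Finset.sum_congr rfl height_eq, Finset.sum_add_distrib, ← Finset.mul_sum,
    ← Nat.cast_sum, sum_range_succ_mod_two]

lemma IsDyck.even_length {s : List ℤ} (hs : IsDyck s) : Even s.length := by
  have := sum_emod_two hs.1
  rw [hs.2.2] at this
  rw [Nat.even_iff]
  omega

lemma IsDyck.area_eq {s : List ℤ} (hs : IsDyck s) : area s = s.length / 2 + 2 * rank s := by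
  have hlen := Nat.even_iff.1 hs.even_length
  have harea := area_eq_add_two_mul_sum hs.1
  have hnonneg : 0 ≤ ∑ i ∈ Finset.range (s.length + 1), (s.take i).sum / 2 :=
    Finset.sum_nonneg fun i _ => Int.ediv_nonneg (hs.2.1 i) zero_le_two
  rw [rank]
  omega

lemma IsDyck.area_eq_iff {s : List ℤ} (hs : IsDyck s) {n : ℕ} (hn : s.length = 2 * n) (r : ℕ) :
    area s = n + 2 * r ↔ rank s = r := by
  rw [hs.area_eq]
  omega

lemma IsDyck.two_mul_sum_take_le {s : List ℤ} (hs : IsDyck s) (i : ℕ) :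
    2 * (s.take i).sum ≤ s.length := by
  have up := List.sum_le_card_nsmul (s.take i) 1 fun x hx => by
    have := hs.1 x (List.mem_of_mem_take hx)
    omega
  have down := List.card_nsmul_le_sum (s.drop i) (-1) fun x hx => by
    have := hs.1 x (List.mem_of_mem_drop hx)
    omega
  have total : (s.take i).sum + (s.drop i).sum = 0 := by rw [List.sum_take_add_sum_drop, hs.2.2]
  have hlen : (s.take i).length + (s.drop i).length = s.length := by
    rw [← List.length_append, List.take_append_drop]
  simp only [nsmul_eq_mul, mul_one, mul_neg] at up down
  omega

lemma IsDyck.rank_le {s : List ℤ} (hs : IsDyck s) {n : ℕ} (hn : s.length = 2 * n) :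
    rank s ≤ n * n := by
  have harea : area s ≤ (s.length + 1) * n := by
    refine (Finset.sum_le_card_nsmul _ _ (n : ℤ) fun i _ => ?_).trans_eq (by simp)
    have := hs.two_mul_sum_take_le i
    omega
  rw [hs.area_eq, hn] at harea
  push_cast at harea
  zify
  rw [Int.mul_ediv_cancel_left _ two_ne_zero] at harea
  linarith

/-! ### Inserting a peak -/

lemma son_append (t w : List ℤ) : son (t ++ w) w.length = t ++ 1 :: -1 :: w := by
  simp [son]

lemma length_son (s : List ℤ) (j : ℕ) : (son s j).length = s.length + 2 := by
  simp only [son, List.length_append, List.length_take, List.length_drop, List.length_cons,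
    List.length_nil]
  omega

lemma son_injective (j : ℕ) : Function.Injective fun s => son s j := by
  intro s t (h : son s j = son t j)
  have hlen : s.length = t.length := by simpa [length_son] using congrArg List.length h
  obtain ⟨hst, hdrop⟩ := List.append_inj' h (by simp [hlen])
  have htake := List.append_cancel_right hst
  rw [← List.take_append_drop (s.length - j) s, htake, hdrop, List.take_append_drop]

lemma isDyck_son_iff (s : List ℤ) (j : ℕ) : IsDyck (son s j) ↔ IsDyck s := by
  obtain ⟨t, w, hs, hson⟩ : ∃ t w, s = t ++ w ∧ son s j = t ++ 1 :: -1 :: w :=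
    ⟨s.take (s.length - j), s.drop (s.length - j), by simp, by simp [son]⟩
  rw [hson, hs]
  refine and_congr ?_ (and_congr ?_ ?_)
  · simp [or_imp, forall_and]
  · simp only [forall_sum_take_append_nonneg_iff, forall_sum_take_cons_nonneg_iff,
      add_neg_cancel_right]
    refine and_congr_right fun _ => ⟨fun h => h.2.2, fun h => ?_⟩
    have : 0 ≤ t.sum := by simpa using h 0
    exact ⟨this, by omega, h⟩
  · simp

lemma area_son (s : List ℤ) (j : ℕ) :
    area (son s j) = area s + 2 * (s.take (s.length - j)).sum + 1 := by
  conv_rhs => rw [← List.take_append_drop (s.length - j) s, area_append]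
  simp only [son, List.append_assoc, List.cons_append, List.nil_append, area_append, area_cons,
    List.length_cons, List.take_append_drop]
  push_cast
  ring

lemma IsDyck.rank_son {s : List ℤ} (hs : IsDyck s) (j : ℕ) :
    (rank (son s j) : ℤ) = rank s + (s.take (s.length - j)).sum := by
  have harea := area_son s j
  rw [hs.area_eq, ((isDyck_son_iff s j).2 hs).area_eq, length_son] at harea
  omega

lemma dyckPathsEndingIn_peak (n : ℕ) (w : List ℤ) :
    dyckPathsEndingIn (n + 1) (1 :: -1 :: w) =
      (fun P => son P w.length) '' dyckPathsEndingIn n w := by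
  ext Q
  constructor
  · rintro ⟨hQ, hlen, t, rfl⟩
    rw [← son_append] at hQ hlen
    rw [isDyck_son_iff] at hQ
    rw [length_son] at hlen
    exact ⟨t ++ w, ⟨hQ, by omega, List.suffix_append t w⟩, son_append t w⟩
  · rintro ⟨_, ⟨hP, hlen, t, rfl⟩, rfl⟩
    refine ⟨(isDyck_son_iff _ _).2 hP, ?_, ?_⟩
    · rw [length_son, hlen, mul_add_one]
    · simpa only [son_append] using List.suffix_append t (1 :: -1 :: w)

/-! ### Paths ending in `D^k U D` -/

lemma length_descentPeak (k : ℕ) : (descentPeak k).length = k + 2 := by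
  simp [descentPeak]

lemma sum_descentPeak (k : ℕ) : (descentPeak k).sum = -k := by
  simp [descentPeak]

lemma descentPeak_add (j k : ℕ) :
    descentPeak (j + k) = List.replicate j (-1) ++ descentPeak k := by
  rw [descentPeak, List.replicate_add, List.append_assoc, descentPeak]

lemma descentPeak_succ (k : ℕ) : descentPeak (k + 1) = -1 :: descentPeak k := rfl

lemma descentPeak_suffix {j k : ℕ} (h : j ≤ k) : descentPeak j <:+ descentPeak k := by
  obtain ⟨i, rfl⟩ := Nat.exists_eq_add_of_le' h
  exact ⟨_, (descentPeak_add i j).symm⟩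

lemma endsUDkUD_iff_suffix (s : List ℤ) (k : ℕ) :
    endsUDkUD s k ↔ 1 :: descentPeak (k + 1) <:+ s :=
  exists_congr fun _ => eq_comm

lemma IsDyck.eq_one_of_cons {x : ℤ} {s : List ℤ} (h : IsDyck (x :: s)) : x = 1 := by
  have hnonneg : 0 ≤ x := by simpa using h.2.1 1
  have := h.1 x List.mem_cons_self
  omega

lemma IsDyck.sum_eq_of_append_descentPeak {t : List ℤ} {k : ℕ}
    (h : IsDyck (t ++ descentPeak k)) : t.sum = k := by
  have := h.2.2
  rw [List.sum_append, sum_descentPeak] at this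
  omega

lemma IsDyck.rank_son_of_descentPeak_suffix {s : List ℤ} {k : ℕ} (hs : IsDyck s)
    (hsuffix : descentPeak k <:+ s) : rank (son s (descentPeak k).length) = k + rank s := by
  obtain ⟨t, rfl⟩ := hsuffix
  have hrank := hs.rank_son (descentPeak k).length
  rw [List.length_append, Nat.add_sub_cancel, List.take_left,
    hs.sum_eq_of_append_descentPeak] at hrank
  omega

lemma IsDyck.one_mem_of_append_descentPeak {t : List ℤ} {k : ℕ} (h : IsDyck (t ++ descentPeak k))
    (hlen : 2 < (t ++ descentPeak k).length) : 1 ∈ t := by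
  cases t with
  | nil =>
    have : k = 0 := by simpa [eq_comm] using h.sum_eq_of_append_descentPeak
    simp [this, descentPeak] at hlen
  | cons x t => exact h.eq_one_of_cons ▸ List.mem_cons_self

lemma IsDyck.descent_mem_Icc {u : List ℤ} {m n : ℕ} (h : IsDyck (u ++ 1 :: descentPeak m))
    (hlen : (u ++ 1 :: descentPeak m).length = 2 * n) : m ∈ Finset.Icc 1 (n - 1) := by
  have hsum : (u ++ [1]).sum = (m : ℤ) := by
    rw [List.append_cons] at h
    exact h.sum_eq_of_append_descentPeak
  have hnonneg : 0 ≤ u.sum := by simpa using h.2.1 u.length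
  have hle := List.sum_le_card_nsmul u 1 fun x hx => by
    have := h.1 x (List.mem_append_left _ hx)
    omega
  simp only [List.sum_append, List.sum_singleton] at hsum
  simp only [nsmul_eq_mul, mul_one] at hle
  simp only [List.length_append, List.length_cons, length_descentPeak] at hlen
  rw [Finset.mem_Icc]
  omega

lemma dyckPathsEndingIn_descentPeak {n : ℕ} (hn : 2 ≤ n) (k : ℕ) :
    dyckPathsEndingIn n (descentPeak k) =
      ⋃ i ∈ Finset.Icc (k - 1) (n - 2), dyckPathsEndingIn n (1 :: descentPeak (i + 1)) := by
  ext P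
  simp only [Set.mem_iUnion, Finset.mem_Icc, exists_prop]
  constructor
  · rintro ⟨hP, hlen, t, rfl⟩
    obtain ⟨u, v, rfl, hv⟩ :=
      exists_eq_append_cons_notMem (hP.one_mem_of_append_descentPeak (by omega))
    have hdown : v = List.replicate v.length (-1) := List.eq_replicate_of_mem fun x hx =>
      (hP.1 x (by simp [hx])).resolve_left (ne_of_mem_of_not_mem hx hv)
    have hsplit : (u ++ 1 :: v) ++ descentPeak k = u ++ 1 :: descentPeak (v.length + k) := by
      rw [descentPeak_add, ← hdown, List.append_assoc, List.cons_append]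
    rw [hsplit] at hP hlen ⊢
    have hbounds := Finset.mem_Icc.1 (hP.descent_mem_Icc hlen)
    refine ⟨v.length + k - 1, by omega, hP, hlen, u, ?_⟩
    rw [Nat.sub_add_cancel hbounds.1]
  · rintro ⟨i, ⟨hi, -⟩, hP, hlen, hsuffix⟩
    have : descentPeak k <:+ descentPeak (i + 1) := descentPeak_suffix (by omega)
    exact ⟨hP, hlen, this.trans ((List.suffix_cons _ _).trans hsuffix)⟩

/-- If `i < j`, the step before the common suffix `D^i U D` is `U` for one word and `D` for the
other. -/
lemma eq_of_cons_descentPeak_suffix {P : List ℤ} {i j : ℕ} (hi : 1 :: descentPeak i <:+ P)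
    (hj : 1 :: descentPeak j <:+ P) : i = j := by
  wlog hij : i ≤ j generalizing i j
  · exact (this hj hi (le_of_not_ge hij)).symm
  refine hij.eq_of_not_lt fun hlt => ?_
  have hdown : -1 :: descentPeak i <:+ P :=
    (descentPeak_suffix hlt).trans ((List.suffix_cons _ _).trans hj)
  have := (List.suffix_of_suffix_length_le hi hdown le_rfl).eq_of_length rfl
  simp at this

lemma pairwiseDisjoint_dyckPathsEndingIn (n : ℕ) (I : Set ℕ) :
    I.PairwiseDisjoint fun i => dyckPathsEndingIn n (1 :: descentPeak (i + 1)) := by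
  intro i _ j _ hij
  refine Set.disjoint_left.2 fun P hi hj => hij ?_
  exact Nat.succ_injective (eq_of_cons_descentPeak_suffix hi.2.2 hj.2.2)

/-! ### Rank generating functions -/

lemma finite_dyckPathsEndingIn (n : ℕ) (w : List ℤ) : (dyckPathsEndingIn n w).Finite :=
  (finite_length_eq_of_forall_mem (Set.toFinite {1, -1}) (2 * n)).subset
    fun _ hP => ⟨hP.1.1, hP.2.1⟩

lemma rankGenFun_eq_sum_range {S : Set (List ℤ)} (hS : S.Finite) {N : ℕ}
    (hN : ∀ P ∈ S, rank P < N) :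
    rankGenFun S = ∑ r ∈ Finset.range N,
      Polynomial.C ({P ∈ S | rank P = r}.ncard : ℤ) * Polynomial.X ^ r := by
  rw [rankGenFun, finsum_mem_eq_finite_toFinset_sum _ hS,
    ← Finset.sum_fiberwise_of_maps_to' (g := rank) (t := Finset.range N) (by simpa using hN)]
  refine Finset.sum_congr rfl fun r _ => ?_
  have : {P ∈ S | rank P = r} = ↑{P ∈ hS.toFinset | rank P = r} := by simp
  rw [this, Set.ncard_coe_finset, Finset.sum_const, nsmul_eq_mul, map_natCast]

lemma rankGenFun_biUnion {ι : Type*} (I : Finset ι) {S : ι → Set (List ℤ)}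
    (hS : ∀ i ∈ I, (S i).Finite) (hdisj : (I : Set ι).PairwiseDisjoint S) :
    rankGenFun (⋃ i ∈ I, S i) = ∑ i ∈ I, rankGenFun (S i) :=
  (finsum_mem_biUnion hdisj I.finite_toSet hS).trans (finsum_mem_coe_finset _ _)

lemma rankGenFun_image {S : Set (List ℤ)} {f : List ℤ → List ℤ} (hf : S.InjOn f)
    {k : ℕ} (hrank : ∀ P ∈ S, rank (f P) = k + rank P) :
    rankGenFun (f '' S) = Polynomial.X ^ k * rankGenFun S := by
  rw [rankGenFun, rankGenFun, finsum_mem_image hf, mul_finsum_mem]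
  exact finsum_mem_congr rfl fun P hP => by rw [hrank P hP, pow_add]

lemma Pnk_eq_rankGenFun (n k : ℕ) :
    Pnk n k = rankGenFun (dyckPathsEndingIn n (1 :: descentPeak (k + 1))) := by
  rw [rankGenFun_eq_sum_range (finite_dyckPathsEndingIn _ _)
    fun P hP => Nat.lt_succ_of_le (hP.1.rank_le hP.2.1), Pnk]
  refine Finset.sum_congr rfl fun r _ => ?_
  have : {P ∈ dyckPathsEndingIn n (1 :: descentPeak (k + 1)) | rank P = r} =
      {P | IsDyck P ∧ P.length = 2 * n ∧ endsUDkUD P k ∧ area P = n + 2 * r} := by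
    ext P
    simp only [dyckPathsEndingIn, Set.mem_ofPred_eq, and_assoc]
    exact and_congr_right fun hP => and_congr_right fun hlen =>
      and_congr (endsUDkUD_iff_suffix P k).symm (hP.area_eq_iff hlen r).symm
  rw [this]
  rfl

/-- For `n ≥ 3` and `0 ≤ k ≤ n − 2`, the ballot-like recurrence
`P_n^{(k)}(x) = x^k · Σ_{i = max(k−1,0)}^{n−3} P_{n−1}^{(i)}(x)` holds
(here `max(k−1,0)` is the truncated subtraction `k - 1` in `ℕ`). -/
theorem Pnk_ballot_recurrence (n k : ℕ) (hn : 3 ≤ n) (hk : k ≤ n - 2) :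
    Pnk n k = Polynomial.X ^ k * ∑ i ∈ Finset.Icc (k - 1) (n - 3), Pnk (n - 1) i := by
  obtain ⟨n, rfl⟩ : ∃ m, n = m + 1 := ⟨n - 1, by omega⟩
  calc
    Pnk (n + 1) k = rankGenFun (dyckPathsEndingIn (n + 1) (1 :: -1 :: descentPeak k)) := by
      rw [Pnk_eq_rankGenFun, descentPeak_succ]
    _ = Polynomial.X ^ k * rankGenFun (dyckPathsEndingIn n (descentPeak k)) := by
      rw [dyckPathsEndingIn_peak]
      exact rankGenFun_image (son_injective _).injOn fun _ hP =>
        hP.1.rank_son_of_descentPeak_suffix hP.2.2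
    _ = Polynomial.X ^ k * ∑ i ∈ Finset.Icc (k - 1) (n - 2),
          rankGenFun (dyckPathsEndingIn n (1 :: descentPeak (i + 1))) := by
      rw [dyckPathsEndingIn_descentPeak (by omega), rankGenFun_biUnion _
        (fun _ _ => finite_dyckPathsEndingIn _ _) (pairwiseDisjoint_dyckPathsEndingIn _ _)]
    _ = Polynomial.X ^ k * ∑ i ∈ Finset.Icc (k - 1) (n + 1 - 3), Pnk (n + 1 - 1) i := by
      simp only [Pnk_eq_rankGenFun, Nat.add_sub_cancel, Nat.add_sub_add_right n 1 2]
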